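/- arXiv:0712.2924 — 2 statements merged into one kernel-verified Lean document; each statement's English description precedes it below -/
import Mathlib

section
/- For every real number X with 0 ≤ X ≤ 1, every n : ℕ and every configuration α : Fin n → Bool, the Kraus string expands as a weighted sum of class strings over all quantum histories: K(α) = ∑_{Φ : Fin n → Bool} (X^(d(α,Φ)) • ((Real.sqrt (1+X^2))⁻¹)^n : ℂ) • C(Φ), as an equality of linear maps H →ₗ[ℂ] H. (This is the expansion at the heart of the proof of Lemma 1: each jump operator is a linear combination of the two projections on its link, and expanding the product produces one term for each quantum field configuration, weighted by X to the power of its Hamming distance from the classical configuration.) -/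
open scoped InnerProductSpace

noncomputable section

/-- Ordered composition `A (n-1) ∘ₗ ⋯ ∘ₗ A 0` of a family of linear maps. -/
def opString {H : Type*} [NormedAddCommGroup H] [InnerProductSpace ℂ H] {n : ℕ}
    (A : Fin n → (H →ₗ[ℂ] H)) : H →ₗ[ℂ] H :=
  (List.finRange n).foldl (fun acc i => A i ∘ₗ acc) LinearMap.id

/-- Hamming distance: the number of indices on which two configurations differ. -/
def hamming {n : ℕ} (f g : Fin n → Bool) : ℕ :=
  (Finset.univ.filter fun i => f i ≠ g i).card

/-- The jump (Kraus) operator `J i b = (√(1+X²))⁻¹ • (P i b + X • P i (!b))`. -/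
def jumpOp {H : Type*} [NormedAddCommGroup H] [InnerProductSpace ℂ H] {n : ℕ}
    (X : ℝ) (P : Fin n → Bool → (H →ₗ[ℂ] H)) (i : Fin n) (b : Bool) : H →ₗ[ℂ] H :=
  (((Real.sqrt (1 + X ^ 2))⁻¹ : ℝ) : ℂ) • (P i b + (X : ℂ) • P i (!b))

/-- The Kraus string `K(α) = J (n-1) (α (n-1)) ∘ₗ R (n-1) ∘ₗ ⋯ ∘ₗ J 0 (α 0) ∘ₗ R 0`. -/
def krausString {H : Type*} [NormedAddCommGroup H] [InnerProductSpace ℂ H] {n : ℕ}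
    (X : ℝ) (R : Fin n → (H →ₗ[ℂ] H)) (P : Fin n → Bool → (H →ₗ[ℂ] H))
    (α : Fin n → Bool) : H →ₗ[ℂ] H :=
  opString fun i => jumpOp X P i (α i) ∘ₗ R i

/-- The class string `C(Φ) = P (n-1) (Φ (n-1)) ∘ₗ R (n-1) ∘ₗ ⋯ ∘ₗ P 0 (Φ 0) ∘ₗ R 0`. -/
def classString {H : Type*} [NormedAddCommGroup H] [InnerProductSpace ℂ H] {n : ℕ}
    (R : Fin n → (H →ₗ[ℂ] H)) (P : Fin n → Bool → (H →ₗ[ℂ] H))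
    (Φ : Fin n → Bool) : H →ₗ[ℂ] H :=
  opString fun i => P i (Φ i) ∘ₗ R i

section StringExpansion

variable {H : Type*} [NormedAddCommGroup H] [InnerProductSpace ℂ H] {n : ℕ}

theorem opString_eq_prod_ofFn_rev (A : Fin n → Module.End ℂ H) :
    opString A = (List.ofFn fun i => A i.rev).prod := by
  rw [List.ofFn_eq_map, opString, List.foldl_eq_foldr_reverse, List.finRange_reverse,
    List.foldr_map, List.prod_eq_foldr, List.foldr_map]
  rfl

variable (H n) in
/-- The ordered composition `opString` as a multilinear map in its `n` factors, through which the
distributive law for strings is Mathlib's expansion of a multilinear map on sums. Since the last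
factor acts leftmost, the algebra product is taken over the reversed family. -/
def opStringMultilinear :
    MultilinearMap ℂ (fun _ : Fin n => Module.End ℂ H) (Module.End ℂ H) :=
  (MultilinearMap.mkPiAlgebraFin ℂ n (Module.End ℂ H)).domDomCongr Fin.revPerm

theorem opStringMultilinear_apply (A : Fin n → Module.End ℂ H) :
    opStringMultilinear H n A = opString A :=
  (opString_eq_prod_ofFn_rev A).symm

theorem opString_sum_smul {ι : Fin n → Type*} [∀ i, Fintype (ι i)]
    (c : ∀ i, ι i → ℂ) (A : ∀ i, ι i → Module.End ℂ H) :
    opString (fun i => ∑ b, c i b • A i b) =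
      ∑ Φ : ∀ i, ι i, (∏ i, c i (Φ i)) • opString (fun i => A i (Φ i)) := by
  simp only [← opStringMultilinear_apply, MultilinearMap.map_sum, MultilinearMap.map_smul_univ]

theorem prod_ite_ne_eq_pow_hamming {M : Type*} [CommMonoid M] (x : M) (f g : Fin n → Bool) :
    (∏ i, if f i ≠ g i then x else 1) = x ^ hamming f g := by
  rw [← Finset.prod_filter, Finset.prod_const, hamming]

/-- The coefficient of `P i b` in the jump operator `J i a`, which does not depend on `i`. -/
def jumpCoeff (X : ℝ) (a b : Bool) : ℝ :=
  (if a ≠ b then X else 1) * (Real.sqrt (1 + X ^ 2))⁻¹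

theorem prod_jumpCoeff (X : ℝ) (f g : Fin n → Bool) :
    ∏ i, jumpCoeff X (f i) (g i) = X ^ hamming f g * (Real.sqrt (1 + X ^ 2))⁻¹ ^ n := by
  simp only [jumpCoeff, Finset.prod_mul_distrib, prod_ite_ne_eq_pow_hamming, Finset.prod_const,
    Finset.card_univ, Fintype.card_fin]

theorem jumpOp_eq_sum (X : ℝ) (P : Fin n → Bool → (H →ₗ[ℂ] H)) (i : Fin n) (a : Bool) :
    jumpOp X P i a = ∑ b, (jumpCoeff X a b : ℂ) • P i b := by
  have sum_eq_add_not : ∑ b, (jumpCoeff X a b : ℂ) • P i b =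
      (jumpCoeff X a a : ℂ) • P i a + (jumpCoeff X a (!a) : ℂ) • P i (!a) := by
    cases a <;> simp only [Fintype.sum_bool, Bool.not_true, Bool.not_false, add_comm]
  have coeff_self : jumpCoeff X a a = (Real.sqrt (1 + X ^ 2))⁻¹ := by
    simp [jumpCoeff]
  have coeff_not : jumpCoeff X a (!a) = (Real.sqrt (1 + X ^ 2))⁻¹ * X := by
    simp [jumpCoeff, mul_comm]
  rw [sum_eq_add_not, coeff_self, coeff_not, jumpOp, smul_add, smul_smul, Complex.ofReal_mul]

theorem jumpOp_comp_eq_sum (X : ℝ) (P : Fin n → Bool → (H →ₗ[ℂ] H)) (i : Fin n) (a : Bool)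
    (T : H →ₗ[ℂ] H) :
    jumpOp X P i a ∘ₗ T = ∑ b, (jumpCoeff X a b : ℂ) • (P i b ∘ₗ T) := by
  rw [jumpOp_eq_sum, ← Module.End.mul_eq_comp, Finset.sum_mul]
  simp only [Module.End.mul_eq_comp, LinearMap.smul_comp]

theorem krausString_eq_sum_classString_general (X : ℝ) (R : Fin n → (H →ₗ[ℂ] H))
    (P : Fin n → Bool → (H →ₗ[ℂ] H)) (α : Fin n → Bool) :
    krausString X R P α =
      ∑ Φ : Fin n → Bool,
        ((X ^ hamming α Φ * ((Real.sqrt (1 + X ^ 2))⁻¹) ^ n : ℝ) : ℂ) •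
          classString R P Φ :=
  calc krausString X R P α
    _ = opString fun i => ∑ b, (jumpCoeff X (α i) b : ℂ) • (P i b ∘ₗ R i) := by
      simp only [krausString, jumpOp_comp_eq_sum]
    _ = ∑ Φ : Fin n → Bool, (∏ i, (jumpCoeff X (α i) (Φ i) : ℂ)) • classString R P Φ :=
      opString_sum_smul _ _
    _ = _ := by
      simp only [← Complex.ofReal_prod, prod_jumpCoeff]

end StringExpansion

/-- The Kraus string expands as a weighted sum of class strings over all quantum histories,
with weight `X^{d(α,Φ)} (√(1+X²))⁻ⁿ` for each quantum history `Φ`. -/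
theorem krausString_eq_sum_classString
    {H : Type*} [NormedAddCommGroup H] [InnerProductSpace ℂ H] [FiniteDimensional ℂ H]
    (n : ℕ) (X : ℝ) (hX0 : 0 ≤ X) (hX1 : X ≤ 1)
    (R : Fin n → (H →ₗ[ℂ] H)) (P : Fin n → Bool → (H →ₗ[ℂ] H))
    (α : Fin n → Bool) :
    krausString X R P α =
      ∑ Φ : Fin n → Bool,
        ((X ^ hamming α Φ * ((Real.sqrt (1 + X ^ 2))⁻¹) ^ n : ℝ) : ℂ) •
          classString R P Φ :=
  krausString_eq_sum_classString_general X R P α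

end
end

section
/- In the environment model, equip 𝓗 := (Fin n → Bool) → H with the inner product ⟪Ψ, Ψ'⟫ := ∑_{E : Fin n → Bool} ⟪Ψ E, Ψ' E⟫_H. Then for all Φ, Φ', E, E' : Fin n → Bool, ⟪S(Φ,E)Ψ₀, S(Φ',E')Ψ₀⟫ = (if E = E' then ((X^(d(Φ,E) + d(Φ',E')) / (1+X^2)^n : ℝ) : ℂ) * ⟪C(Φ)ψ₀, C(Φ')ψ₀⟫_H else 0), where C(Φ) := P (n-1) (Φ (n-1)) ∘ₗ R (n-1) ∘ₗ ⋯ ∘ₗ P 0 (Φ 0) ∘ₗ R 0 and d denotes Hamming distance. (This is Lemma 3: there is a unitary dynamics of the field coupled to a one-time-interaction environment whose decoherence functional D_qe equals the coupled decoherence functional D_qc of the collapse model, when environment histories are identified with classical histories.) -/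
open scoped InnerProductSpace

noncomputable section

/-- The real 2×2 environment rotation matrices, indexed by `Bool` (`false` first; rows =
outgoing environment value, columns = incoming environment value):
`M false = (√(1+X²))⁻¹ • !![1, X; X, -1]` and `M true = (√(1+X²))⁻¹ • !![X, 1; 1, -X]`. -/
def envM (X : ℝ) (b e' e : Bool) : ℝ :=
  (Real.sqrt (1 + X ^ 2))⁻¹ *
    match b, e', e with
    | false, false, false => 1
    | false, false, true  => X
    | false, true,  false => X
    | false, true,  true  => -1
    | true,  false, false => X
    | true,  false, true  => 1
    | true,  true,  false => 1
    | true,  true,  true  => -X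

variable {H : Type*} [NormedAddCommGroup H] [InnerProductSpace ℂ H]

/-- The lifted elementary unitary evolution on the total space `(Fin n → Bool) → H`. -/
def Rhat {n : ℕ} (R : Fin n → (H →ₗ[ℂ] H)) (i : Fin n)
    (Ψ : (Fin n → Bool) → H) : (Fin n → Bool) → H :=
  fun E => R i (Ψ E)

/-- The lifted field projector on the total space. -/
def Phat {n : ℕ} (P : Fin n → Bool → (H →ₗ[ℂ] H)) (i : Fin n) (b : Bool)
    (Ψ : (Fin n → Bool) → H) : (Fin n → Bool) → H :=
  fun E => P i b (Ψ E)

/-- The environment projector on the total space. -/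
def Qhat {n : ℕ} (i : Fin n) (e : Bool)
    (Ψ : (Fin n → Bool) → H) : (Fin n → Bool) → H :=
  fun E => if E i = e then Ψ E else 0

/-- The partial measurement operator on the total space. -/
def Uhat {n : ℕ} (X : ℝ) (P : Fin n → Bool → (H →ₗ[ℂ] H)) (i : Fin n)
    (Ψ : (Fin n → Bool) → H) : (Fin n → Bool) → H :=
  fun E => ∑ b : Bool, ∑ e' : Bool,
    ((envM X b (E i) e' : ℝ) : ℂ) • P i b (Ψ (Function.update E i e'))

/-- The environment branch string
`S(Φ,E) = Q̂ (n-1) (E (n-1)) ∘ P̂ (n-1) (Φ (n-1)) ∘ Û (n-1) ∘ R̂ (n-1) ∘ ⋯ ∘ Q̂ 0 (E 0) ∘ P̂ 0 (Φ 0) ∘ Û 0 ∘ R̂ 0`. -/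
def envString {n : ℕ} (X : ℝ) (R : Fin n → (H →ₗ[ℂ] H))
    (P : Fin n → Bool → (H →ₗ[ℂ] H)) (Φ E : Fin n → Bool) :
    ((Fin n → Bool) → H) → ((Fin n → Bool) → H) :=
  (List.finRange n).foldl
    (fun acc i => Qhat i (E i) ∘ Phat P i (Φ i) ∘ Uhat X P i ∘ Rhat R i ∘ acc) id

/-- The initial state `Ψ₀`: the field state `ψ₀` tensored with the environment ground state. -/
def initState {n : ℕ} (ψ₀ : H) : (Fin n → Bool) → H :=
  fun E => if E = (fun _ => false) then ψ₀ else 0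

/-!
The environment basis state `|E⟩` tensored with `v : H` is `Pi.single E v`. One step of the branch
string maps `|G⟩ ⊗ v` to `|G[i ↦ e]⟩ ⊗ m • P i b (R i v)`, where `m` is the single entry of `envM`
picked out by orthogonality of the projectors: the state stays a product state. Since step `i`
touches only environment bit `i`, which is still in its initial value, the branch string turns
`|E₀⟩ ⊗ ψ` into `|E⟩ ⊗ C(Φ) ψ` times a product of matrix entries. From the ground state each entry
is `1 / √(1 + X²)`, with an extra `X` where `Φ` and `E` disagree, and the environment records `E`,
`E'` are orthonormal.
-/

theorem orthogonalIdempotents_of_add_eq_one {A : Type*} [Ring A] {p : Bool → A}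
    (hsum : p false + p true = 1) (hidem : ∀ b, IsIdempotentElem (p b)) :
    OrthogonalIdempotents p where
  idem := hidem
  ortho := by
    have hfalse : p false = 1 - p true := eq_sub_of_add_eq hsum
    have htrue : p true = 1 - p false := eq_sub_of_add_eq' hsum
    rintro (_ | _) (_ | _) hne
    · exact absurd rfl hne
    · simpa only [htrue] using (hidem false).mul_one_sub_self
    · simpa only [hfalse] using (hidem true).mul_one_sub_self
    · exact absurd rfl hne

theorem sum_inner_single_single {𝕜 ι V : Type*} [RCLike 𝕜] [SeminormedAddCommGroup V]
    [InnerProductSpace 𝕜 V] [Fintype ι] [DecidableEq ι] (i j : ι) (v w : V) :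
    ∑ k, inner 𝕜 ((Pi.single i v : ι → V) k) ((Pi.single j w : ι → V) k) =
      if i = j then inner 𝕜 v w else 0 := by
  rw [Fintype.sum_eq_single i fun k hk => by rw [Pi.single_eq_of_ne hk, inner_zero_left],
    Pi.single_eq_same, Pi.single_apply]
  split_ifs with h
  · rfl
  · exact inner_zero_right v

theorem foldl_comp_single {𝕜 ι β V : Type*} [CommSemiring 𝕜] [AddCommMonoid V] [Module 𝕜 V]
    [DecidableEq ι] [DecidableEq (ι → β)] {T : ι → ((ι → β) → V) → ((ι → β) → V)}
    {A : ι → V →ₗ[𝕜] V} {c : ι → β → 𝕜} {e : ι → β}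
    (hT : ∀ i g v, T i (Pi.single g v) =
      Pi.single (Function.update g i (e i)) (c i (g i) • A i v))
    {l : List ι} (hl : l.Nodup) (g : ι → β) (v : V) :
    l.foldl (fun acc i => T i ∘ acc) id (Pi.single g v) =
      Pi.single (l.toFinset.piecewise e g)
        ((l.map fun i => c i (g i)).prod •
          l.foldl (fun acc i => A i ∘ₗ acc) LinearMap.id v) := by
  induction l using List.reverseRecOn with
  | nil =>
    rw [List.toFinset_nil, Finset.piecewise_empty, List.map_nil, List.prod_nil, one_smul]
    rfl
  | append_singleton l i ih =>
    obtain ⟨hi, hl⟩ : i ∉ l ∧ l.Nodup := by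
      rwa [← List.nodup_concat, List.concat_eq_append]
    have hfresh : l.toFinset.piecewise e g i = g i :=
      Finset.piecewise_eq_of_notMem _ _ _ (by simpa only [List.mem_toFinset] using hi)
    have htoFinset : (l ++ [i]).toFinset = insert i l.toFinset := by simp
    rw [htoFinset, Finset.piecewise_insert]
    simp only [List.foldl_append, List.foldl_cons, List.foldl_nil, Function.comp_apply,
      LinearMap.comp_apply, ih hl, hT, hfresh, map_smul, smul_smul, List.map_append,
      List.map_cons, List.map_nil, List.prod_append, List.prod_singleton, mul_comm]

theorem initState_eq_single {V : Type*} [NormedAddCommGroup V] {n : ℕ} (ψ : V) :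
    initState (n := n) ψ = Pi.single (fun _ => false) ψ := by
  funext F
  rw [initState, Pi.single_apply]

section LiftedOperators

variable {n : ℕ} (i : Fin n)

theorem Rhat_single (R : Fin n → (H →ₗ[ℂ] H)) (E : Fin n → Bool) (v : H) :
    Rhat R i (Pi.single E v) = Pi.single E (R i v) :=
  funext fun F => Pi.apply_single (fun _ => R i) (fun _ => map_zero _) E v F

theorem Phat_sum_single {κ : Type*} [Fintype κ] (P : Fin n → Bool → (H →ₗ[ℂ] H)) (b : Bool)
    (E : κ → Fin n → Bool) (v : κ → H) :
    Phat P i b (∑ k, Pi.single (E k) (v k)) = ∑ k, Pi.single (E k) (P i b (v k)) := by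
  funext F
  simp only [Phat, Finset.sum_apply, map_sum, Pi.single_apply, apply_ite (P i b), map_zero]

theorem Qhat_sum_single_update {V : Type*} [NormedAddCommGroup V] (E : Fin n → Bool) (e : Bool)
    (v : Bool → V) :
    Qhat i e (∑ e', Pi.single (Function.update E i e') (v e')) =
      Pi.single (Function.update E i e) (v e) := by
  funext F
  simp only [Qhat, Finset.sum_apply, Pi.single_apply, Function.eq_update_iff]
  cases e <;> cases F i <;> simp

theorem Uhat_single (X : ℝ) (P : Fin n → Bool → (H →ₗ[ℂ] H)) (E : Fin n → Bool) (v : H) :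
    Uhat X P i (Pi.single E v) =
      ∑ e, Pi.single (Function.update E i e) (∑ b, (envM X b e (E i) : ℂ) • P i b v) := by
  funext F
  simp only [Uhat, Finset.sum_apply, Pi.single_apply, Function.eq_update_iff,
    Function.update_eq_iff]
  by_cases hF : ∀ j ≠ i, F j = E j
  · simp only [and_iff_left hF, apply_ite (P i _), map_zero, smul_ite, smul_zero, Finset.sum_ite_eq,
      Finset.sum_ite_eq', Finset.mem_univ, if_true]
  · simp only [hF, and_false, if_false, map_zero, smul_zero, Finset.sum_const_zero]

end LiftedOperators

section BranchString

variable {n : ℕ} (X : ℝ) (R : Fin n → (H →ₗ[ℂ] H)) {P : Fin n → Bool → (H →ₗ[ℂ] H)}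

theorem Qhat_Phat_Uhat_Rhat_single {i : Fin n} (hP : OrthogonalIdempotents (P i)) (b e : Bool)
    (E : Fin n → Bool) (v : H) :
    Qhat i e (Phat P i b (Uhat X P i (Rhat R i (Pi.single E v)))) =
      Pi.single (Function.update E i e) ((envM X b e (E i) : ℂ) • (P i b ∘ₗ R i) v) := by
  have hmul (b' : Bool) (w : H) : P i b (P i b' w) = if b = b' then P i b w else 0 := by
    rw [← Module.End.mul_apply, hP.mul_eq]
    split_ifs <;> rfl
  rw [Rhat_single, Uhat_single, Phat_sum_single, Qhat_sum_single_update]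
  simp only [map_sum, map_smul, hmul, smul_ite, smul_zero, Finset.sum_ite_eq, Finset.mem_univ,
    if_true, LinearMap.comp_apply]

theorem envString_single (hP : ∀ i, OrthogonalIdempotents (P i)) (Φ E E₀ : Fin n → Bool)
    (ψ : H) :
    envString X R P Φ E (Pi.single E₀ ψ) =
      Pi.single E ((∏ i, (envM X (Φ i) (E i) (E₀ i) : ℂ)) • classString R P Φ ψ) := by
  have hfold := foldl_comp_single
    (T := fun i => Qhat i (E i) ∘ Phat P i (Φ i) ∘ Uhat X P i ∘ Rhat R i)
    (A := fun i => P i (Φ i) ∘ₗ R i) (c := fun i e₀ => (envM X (Φ i) (E i) e₀ : ℂ)) (e := E)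
    (fun i => Qhat_Phat_Uhat_Rhat_single X R (hP i) (Φ i) (E i)) (List.nodup_finRange n) E₀ ψ
  rw [List.toFinset_finRange, Finset.piecewise_univ, ← Fin.prod_univ_def] at hfold
  exact hfold

end BranchString

theorem envM_false_right (X : ℝ) (b e : Bool) :
    envM X b e false = (√(1 + X ^ 2))⁻¹ * if b ≠ e then X else 1 := by
  cases b <;> cases e <;> simp [envM]

theorem prod_envM_false_right {n : ℕ} (X : ℝ) (Φ E : Fin n → Bool) :
    ∏ i, envM X (Φ i) (E i) false = X ^ hamming Φ E / √(1 + X ^ 2) ^ n := by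
  simp only [envM_false_right, Finset.prod_mul_distrib, Finset.prod_const, Finset.card_univ,
    Fintype.card_fin, Finset.prod_ite, one_pow, mul_one, inv_pow, hamming, div_eq_inv_mul]

theorem env_decoherence_functional_eq_coupled_general
    {H : Type*} [NormedAddCommGroup H] [InnerProductSpace ℂ H]
    (n : ℕ) (X : ℝ) (R : Fin n → (H →ₗ[ℂ] H)) (P : Fin n → Bool → (H →ₗ[ℂ] H))
    (hP : ∀ i, OrthogonalIdempotents (P i))
    (ψ₀ : H) (Φ Φ' E E' : Fin n → Bool) :
    ∑ F : Fin n → Bool,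
        ⟪envString X R P Φ E (initState ψ₀) F, envString X R P Φ' E' (initState ψ₀) F⟫_ℂ =
      if E = E' then
        ((X ^ (hamming Φ E + hamming Φ' E') / (1 + X ^ 2) ^ n : ℝ) : ℂ) *
          ⟪classString R P Φ ψ₀, classString R P Φ' ψ₀⟫_ℂ
      else 0 := by
  have hcoeff : X ^ hamming Φ' E' / √(1 + X ^ 2) ^ n * (X ^ hamming Φ E / √(1 + X ^ 2) ^ n) =
      X ^ (hamming Φ E + hamming Φ' E') / (1 + X ^ 2) ^ n := by
    rw [div_mul_div_comm, ← pow_add, add_comm (hamming Φ' E'), ← mul_pow,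
      Real.mul_self_sqrt (by positivity)]
  simp only [initState_eq_single, envString_single X R hP, sum_inner_single_single,
    ← Complex.ofReal_prod, prod_envM_false_right, inner_smul_left, inner_smul_right,
    Complex.conj_ofReal, ← mul_assoc, ← Complex.ofReal_mul, hcoeff]

/-- Lemma 3: the decoherence functional `D_qe` of the unitary field-plus-environment model
(with inner product `⟪Ψ, Ψ'⟫ = ∑_E ⟪Ψ E, Ψ' E⟫` on the total space) equals the coupled
decoherence functional `D_qc` of the collapse model when environment histories are identified
with classical histories. -/
theorem env_decoherence_functional_eq_coupled
    {H : Type*} [NormedAddCommGroup H] [InnerProductSpace ℂ H] [FiniteDimensional ℂ H]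
    (n : ℕ) (X : ℝ) (hX0 : 0 ≤ X) (hX1 : X ≤ 1)
    (R : Fin n → (H →ₗ[ℂ] H)) (P : Fin n → Bool → (H →ₗ[ℂ] H))
    (hPsum : ∀ i, P i false + P i true = LinearMap.id)
    (hPidem : ∀ i b, P i b ∘ₗ P i b = P i b)
    (ψ₀ : H) (Φ Φ' E E' : Fin n → Bool) :
    ∑ F : Fin n → Bool,
        ⟪envString X R P Φ E (initState ψ₀) F, envString X R P Φ' E' (initState ψ₀) F⟫_ℂ =
      if E = E' then
        ((X ^ (hamming Φ E + hamming Φ' E') / (1 + X ^ 2) ^ n : ℝ) : ℂ) *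
          ⟪classString R P Φ ψ₀, classString R P Φ' ψ₀⟫_ℂ
      else 0 := by
  exact env_decoherence_functional_eq_coupled_general n X R P
    (fun i => orthogonalIdempotents_of_add_eq_one (hPsum i) (hPidem i)) ψ₀ Φ Φ' E E'

end
end
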